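/- arXiv:math/9201203 — 2 statements merged into one kernel-verified Lean document; each statement's English description precedes it below -/
import Mathlib

section
/- Let 1 ≤ k ≤ n and let U be a k-dimensional linear subspace of ℝ^n. If 1 ≤ p ≤ q ≤ ∞, then |B_p^n ∩ U| / |B_p^k| ≤ |B_q^n ∩ U| / |B_q^k|, where |B_p^n ∩ U| denotes the k-dimensional (Lebesgue) volume of the section B_p^n ∩ U measured inside U, and |B_p^k| denotes the k-dimensional volume of B_p^k. -/
open MeasureTheory
open scoped Classical ENNReal

/-- The unit ball of `ℓ_p^m` in `ℝ^m`, for `p ∈ [1, ∞]` (an extended real). -/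
noncomputable def lpBall (m : ℕ) (p : ℝ≥0∞) : Set (EuclideanSpace ℝ (Fin m)) :=
  if p = ∞ then {x | ∀ i, |x i| ≤ 1} else {x | ∑ i, |x i| ^ p.toReal ≤ 1}

/-!
Let `φ_p` be the dilate of `exp (-|t| ^ p)` that is a probability density on the line. Integrating
`exp (-‖x‖_p ^ p)` in polar form turns the ratio `|B_p^n ∩ U| / |B_p^k|` into the integral of
`∏ i, φ_p (x i)` over `U`, so it suffices to replace `φ_p` by `φ_q` one coordinate at a time.
The other factors form an even log-concave function on `U`, whose marginal along the remaining
coordinate is again even and log-concave by the Prékopa–Leindler inequality, hence nonincreasing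
in `|t|`. As `φ_p` and `φ_q` have equal mass and their graphs cross only once on `[0, ∞)`, with
`φ_q` on top near the origin, `φ_q` has the larger integral against every such marginal.
-/

open Set Module
open scoped NNReal Pointwise

section PrekopaLeindlerReal

theorem volume_add_le_volume_add_of_isCompact {K L : Set ℝ} (hK : IsCompact K)
    (hL : IsCompact L) (hK₀ : K.Nonempty) (hL₀ : L.Nonempty) :
    volume K + volume L ≤ volume (K + L) := by
  have hmax : sSup K ∈ K := hK.sSup_mem hK₀
  have hmin : sInf L ∈ L := hL.sInf_mem hL₀
  have translates_disjoint : AEDisjoint volume (sInf L +ᵥ K) (sSup K +ᵥ L) := by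
    refine measure_mono_null (t := {sSup K + sInf L}) ?_ Real.volume_singleton
    rintro _ ⟨⟨x, hx, rfl⟩, ⟨y, hy, hxy⟩⟩
    have hx' : x ≤ sSup K := le_csSup hK.bddAbove hx
    have hy' : sInf L ≤ y := csInf_le hL.bddBelow hy
    simp only [vadd_eq_add, mem_singleton_iff] at hxy ⊢
    linarith
  calc volume K + volume L = volume (sInf L +ᵥ K) + volume (sSup K +ᵥ L) := by
        simp only [measure_vadd]
    _ = volume ((sInf L +ᵥ K) ∪ (sSup K +ᵥ L)) :=
        (measure_union₀ (hL.vadd _).measurableSet.nullMeasurableSet translates_disjoint).symm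
    _ ≤ volume (K + L) := by
        refine measure_mono (union_subset ?_ ?_)
        · rintro _ ⟨x, hx, rfl⟩
          exact ⟨x, hx, _, hmin, add_comm _ _⟩
        · rintro _ ⟨y, hy, rfl⟩
          exact ⟨_, hmax, y, hy, rfl⟩

theorem volume_add_le_volume_add {A B : Set ℝ} (hA : MeasurableSet A) (hB : MeasurableSet B)
    (hA₀ : A.Nonempty) (hB₀ : B.Nonempty) : volume A + volume B ≤ volume (A + B) := by
  obtain ⟨x₀, hx₀⟩ := hA₀
  obtain ⟨y₀, hy₀⟩ := hB₀
  have le_of_isCompact : ∀ K ⊆ A, IsCompact K → ∀ L ⊆ B, IsCompact L →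
      volume K + volume L ≤ volume (A + B) := fun K hKA hK L hLB hL ↦
    calc volume K + volume L ≤ volume (insert x₀ K) + volume (insert y₀ L) := by
          gcongr <;> exact subset_insert _ _
      _ ≤ volume (insert x₀ K + insert y₀ L) :=
          volume_add_le_volume_add_of_isCompact (hK.insert x₀) (hL.insert y₀)
            (insert_nonempty _ _) (insert_nonempty _ _)
      _ ≤ volume (A + B) :=
          measure_mono (add_subset_add (insert_subset hx₀ hKA) (insert_subset hy₀ hLB))
  rw [hA.measure_eq_iSup_isCompact, hB.measure_eq_iSup_isCompact]
  simp only [iSup_and']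
  exact ENNReal.biSup_add_biSup_le' ⟨∅, empty_subset _, isCompact_empty⟩
    ⟨∅, empty_subset _, isCompact_empty⟩ fun K hK L hL ↦
      le_of_isCompact K hK.1 hK.2 L hL.1 hL.2

theorem lintegral_eq_lintegral_measure_ofReal_lt {α : Type*} [MeasurableSpace α] (μ : Measure α)
    [SFinite μ] {f : α → ℝ≥0∞} (hf : Measurable f) :
    ∫⁻ x, f x ∂μ = ∫⁻ t in Ioi (0 : ℝ), μ {x | ENNReal.ofReal t < f x} := by
  have hmeas : MeasurableSet {z : α × ℝ | ENNReal.ofReal z.2 < f z.1} :=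
    measurableSet_lt (by fun_prop) (by fun_prop)
  have volume_levels (y : ℝ≥0∞) :
      volume.restrict (Ioi 0) {t : ℝ | ENNReal.ofReal t < y} = y := by
    rw [Measure.restrict_apply' measurableSet_Ioi]
    induction y with
    | top => simp
    | coe y =>
      have : {t : ℝ | ENNReal.ofReal t < y} ∩ Ioi 0 = Ioo 0 (y : ℝ) := by
        ext t
        simp only [mem_inter_iff, mem_ofPred_eq, mem_Ioi, mem_Ioo, and_comm (a := 0 < t)]
        exact and_congr_left fun ht ↦ by rw [ENNReal.ofReal_lt_coe_iff ht.le]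
      simp [this]
  calc ∫⁻ x, f x ∂μ
      = ∫⁻ x, volume.restrict (Ioi 0) {t : ℝ | ENNReal.ofReal t < f x} ∂μ := by
        simp only [volume_levels]
    _ = μ.prod (volume.restrict (Ioi 0)) {z | ENNReal.ofReal z.2 < f z.1} :=
        (Measure.prod_apply hmeas).symm
    _ = ∫⁻ t in Ioi (0 : ℝ), μ {x | ENNReal.ofReal t < f x} := Measure.prod_apply_symm hmeas

theorem ennreal_geom_mean_le_arith_mean {a b : ℝ} (ha : 0 < a) (hb : 0 < b) (hab : a + b = 1)
    (x y : ℝ≥0∞) : x ^ a * y ^ b ≤ ENNReal.ofReal a * x + ENNReal.ofReal b * y := by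
  induction x with
  | top => simp [ENNReal.mul_top, ha]
  | coe x =>
  induction y with
  | top => simp [ENNReal.mul_top, hb]
  | coe y =>
    lift a to ℝ≥0 using ha.le
    lift b to ℝ≥0 using hb.le
    rw [← ENNReal.coe_rpow_of_nonneg _ ha.le, ← ENNReal.coe_rpow_of_nonneg _ hb.le,
      ENNReal.ofReal_coe_nnreal, ENNReal.ofReal_coe_nnreal]
    exact_mod_cast NNReal.geom_mean_le_arith_mean2_weighted a b x y (by exact_mod_cast hab)

variable {a b : ℝ} {u v h : ℝ → ℝ≥0∞}

theorem ofReal_mul_volume_add_le_volume_superlevel (ha : 0 < a) (hb : 0 < b) (hab : a + b = 1)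
    (hu : Measurable u) (hv : Measurable v)
    (H : ∀ x y, u x ^ a * v y ^ b ≤ h (a • x + b • y)) {t : ℝ≥0∞}
    (hut : ∃ x, t < u x) (hvt : ∃ y, t < v y) :
    ENNReal.ofReal a * volume {x | t < u x} + ENNReal.ofReal b * volume {y | t < v y} ≤
      volume {z | t < h z} := by
  have volume_smul {c : ℝ} (hc : 0 < c) (s : Set ℝ) :
      ENNReal.ofReal c * volume s = volume (c • s) := by
    simp [Measure.addHaar_smul, abs_of_pos hc]
  rw [volume_smul ha, volume_smul hb]
  refine (volume_add_le_volume_add ((measurableSet_lt measurable_const hu).const_smul₀ a)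
    ((measurableSet_lt measurable_const hv).const_smul₀ b) (Nonempty.smul_set hut)
    (Nonempty.smul_set hvt)).trans (measure_mono ?_)
  rintro _ ⟨_, ⟨x, hx, rfl⟩, _, ⟨y, hy, rfl⟩, rfl⟩
  calc t = t ^ a * t ^ b := by
        rw [← ENNReal.rpow_add_of_nonneg _ _ ha.le hb.le, hab, ENNReal.rpow_one]
    _ < u x ^ a * v y ^ b :=
        ENNReal.mul_lt_mul (ENNReal.rpow_lt_rpow hx ha) (ENNReal.rpow_lt_rpow hy hb)
    _ ≤ h (a • x + b • y) := H x y

-- Having the same maximum, `u` and `v` have nonempty superlevel sets at the same levels, as the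
-- one-dimensional Brunn–Minkowski inequality requires.
theorem add_lintegral_le_lintegral_of_max_eq_one (ha : 0 < a) (hb : 0 < b) (hab : a + b = 1)
    (hu : Measurable u) (hv : Measurable v) (hh : Measurable h)
    (H : ∀ x y, u x ^ a * v y ^ b ≤ h (a • x + b • y))
    (hu₁ : IsGreatest (range u) 1) (hv₁ : IsGreatest (range v) 1) :
    ENNReal.ofReal a * (∫⁻ x, u x) + ENNReal.ofReal b * (∫⁻ y, v y) ≤ ∫⁻ z, h z := by
  have measurable_superlevel (w : ℝ → ℝ≥0∞) :
      Measurable fun t : ℝ ↦ volume {x | ENNReal.ofReal t < w x} :=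
    Antitone.measurable fun s t hst ↦ measure_mono fun x hx ↦
      (ENNReal.ofReal_le_ofReal hst).trans_lt hx
  have superlevel_empty {w : ℝ → ℝ≥0∞} (hw : IsGreatest (range w) 1) {t : ℝ} (ht : 1 ≤ t) :
      {x | ENNReal.ofReal t < w x} = ∅ :=
    eq_empty_of_forall_notMem fun x hx ↦
      (hw.2 (mem_range_self x)).not_gt ((ENNReal.one_le_ofReal.2 ht).trans_lt hx)
  have exists_superlevel {w : ℝ → ℝ≥0∞} (hw : IsGreatest (range w) 1) {t : ℝ} (ht : t < 1) :
      ∃ x, ENNReal.ofReal t < w x := by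
    obtain ⟨x, hx⟩ := hw.1
    exact ⟨x, hx ▸ ENNReal.ofReal_lt_one.2 ht⟩
  rw [lintegral_eq_lintegral_measure_ofReal_lt _ hu, lintegral_eq_lintegral_measure_ofReal_lt _ hv,
    lintegral_eq_lintegral_measure_ofReal_lt _ hh,
    ← lintegral_const_mul _ (measurable_superlevel u),
    ← lintegral_const_mul _ (measurable_superlevel v),
    ← lintegral_add_left ((measurable_superlevel u).const_mul _)]
  refine lintegral_mono fun t ↦ ?_
  rcases lt_or_ge t 1 with ht | ht
  · exact ofReal_mul_volume_add_le_volume_superlevel ha hb hab hu hv H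
      (exists_superlevel hu₁ ht) (exists_superlevel hv₁ ht)
  · simp [superlevel_empty hu₁ ht, superlevel_empty hv₁ ht]

theorem rpow_lintegral_mul_le_of_isGreatest (ha : 0 < a) (hb : 0 < b) (hab : a + b = 1)
    (hu : Measurable u) (hv : Measurable v) (hh : Measurable h)
    (H : ∀ x y, u x ^ a * v y ^ b ≤ h (a • x + b • y)) {M N : ℝ≥0}
    (hM : IsGreatest (range u) M) (hN : IsGreatest (range v) N) :
    (∫⁻ x, u x) ^ a * (∫⁻ y, v y) ^ b ≤ ∫⁻ z, h z := by
  rcases eq_or_ne M 0 with rfl | hM₀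
  · have : ∀ x, u x = 0 := fun x ↦ le_zero_iff.1 (hM.2 (mem_range_self x))
    simp [this, ha]
  rcases eq_or_ne N 0 with rfl | hN₀
  · have : ∀ x, v x = 0 := fun x ↦ le_zero_iff.1 (hN.2 (mem_range_self x))
    simp [this, hb]
  have normalize {w : ℝ → ℝ≥0∞} {R : ℝ≥0} (hR₀ : R ≠ 0) (hR : IsGreatest (range w) R) :
      IsGreatest (range fun x ↦ (R⁻¹ : ℝ≥0) * w x) 1 := by
    have hR₁ : ((R⁻¹ : ℝ≥0) : ℝ≥0∞) * R = 1 := by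
      rw [← ENNReal.coe_mul, inv_mul_cancel₀ hR₀, ENNReal.coe_one]
    obtain ⟨⟨x, hx⟩, hmax⟩ := hR
    refine ⟨⟨x, by simp only [hx, hR₁]⟩, ?_⟩
    rintro _ ⟨y, rfl⟩
    simpa only [hR₁] using mul_le_mul_right (hmax (mem_range_self y)) ((R⁻¹ : ℝ≥0) : ℝ≥0∞)
  set c : ℝ≥0∞ := ((M⁻¹ : ℝ≥0) : ℝ≥0∞) ^ a * ((N⁻¹ : ℝ≥0) : ℝ≥0∞) ^ b with hc
  have rescale (x y : ℝ≥0∞) :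
      ((M⁻¹ : ℝ≥0) * x) ^ a * ((N⁻¹ : ℝ≥0) * y) ^ b = c * (x ^ a * y ^ b) := by
    rw [hc, ENNReal.mul_rpow_of_nonneg _ _ ha.le, ENNReal.mul_rpow_of_nonneg _ _ hb.le]
    ring
  have hc₀ : c ≠ 0 := by simp [hc, hM₀, hN₀]
  have hc_top : c ≠ ∞ := ENNReal.mul_ne_top (by simp [ha.le]) (by simp [hb.le])
  have scaled : c * ((∫⁻ x, u x) ^ a * (∫⁻ y, v y) ^ b) ≤ c * ∫⁻ z, h z := by
    rw [← rescale, ← lintegral_const_mul _ hu, ← lintegral_const_mul _ hv,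
      ← lintegral_const_mul _ hh]
    refine (ennreal_geom_mean_le_arith_mean ha hb hab _ _).trans
      (add_lintegral_le_lintegral_of_max_eq_one ha hb hab (by fun_prop) (by fun_prop) (by fun_prop)
        (fun x y ↦ ?_) (normalize hM₀ hM) (normalize hN₀ hN))
    rw [rescale]
    gcongr
    exact H x y
  exact (ENNReal.mul_le_mul_iff_right hc₀ hc_top).1 scaled

theorem rpow_lintegral_mul_le_lintegral (ha : 0 < a) (hb : 0 < b) (hab : a + b = 1)
    (hh : Measurable h) (H : ∀ x y, u x ^ a * v y ^ b ≤ h (a • x + b • y)) :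
    (∫⁻ x, u x) ^ a * (∫⁻ y, v y) ^ b ≤ ∫⁻ z, h z := by
  refine ENNReal.mul_le_of_forall_lt fun I hI J hJ ↦ ?_
  rw [← ENNReal.rpow_inv_lt_iff ha, lintegral_eq_nnreal] at hI
  rw [← ENNReal.rpow_inv_lt_iff hb, lintegral_eq_nnreal] at hJ
  simp only [lt_iSup_iff] at hI hJ
  obtain ⟨φ, hφ, hI⟩ := hI
  obtain ⟨ψ, hψ, hJ⟩ := hJ
  rw [← SimpleFunc.lintegral_eq_lintegral, ENNReal.rpow_inv_lt_iff ‹_›] at hI hJ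
  have isGreatest_coe (χ : SimpleFunc ℝ ℝ≥0) :
      ∃ M : ℝ≥0, IsGreatest (range (χ.map ((↑) : ℝ≥0 → ℝ≥0∞))) M := by
    obtain ⟨M, hM⟩ := χ.finite_range.isCompact.exists_isGreatest (range_nonempty χ)
    refine ⟨M, ?_⟩
    rw [SimpleFunc.coe_map, range_comp]
    exact ENNReal.coe_mono.map_isGreatest hM
  obtain ⟨M, hM⟩ := isGreatest_coe φ
  obtain ⟨N, hN⟩ := isGreatest_coe ψ
  refine (mul_le_mul' hI.le hJ.le).trans (rpow_lintegral_mul_le_of_isGreatest ha hb hab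
    (SimpleFunc.measurable _) (SimpleFunc.measurable _) hh (fun x y ↦ ?_) hM hN)
  exact (mul_le_mul' (ENNReal.rpow_le_rpow (hφ x) ha.le)
    (ENNReal.rpow_le_rpow (hψ y) hb.le)).trans (H x y)

end PrekopaLeindlerReal

section PrekopaLeindler

/-- The measure `μ` satisfies the Prékopa–Leindler inequality. The three functions take values in
`ℝ≥0∞`, so that no integrability is involved. -/
def PrekopaLeindler {E : Type*} [AddCommGroup E] [Module ℝ E] [MeasurableSpace E]
    (μ : Measure E) : Prop :=
  ∀ ⦃a b : ℝ⦄, 0 < a → 0 < b → a + b = 1 → ∀ ⦃u v h : E → ℝ≥0∞⦄,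
    Measurable u → Measurable v → Measurable h →
    (∀ x y, u x ^ a * v y ^ b ≤ h (a • x + b • y)) →
    (∫⁻ x, u x ∂μ) ^ a * (∫⁻ y, v y ∂μ) ^ b ≤ ∫⁻ z, h z ∂μ

theorem prekopaLeindler_volume_real : PrekopaLeindler (volume : Measure ℝ) :=
  fun _ _ ha hb hab _ _ _ _ _ hh H ↦ rpow_lintegral_mul_le_lintegral ha hb hab hh H

theorem prekopaLeindler_dirac_zero {E : Type*} [AddCommGroup E] [Module ℝ E] [MeasurableSpace E] :
    PrekopaLeindler (Measure.dirac (0 : E)) := by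
  intro a b _ _ _ u v h hu hv hh H
  rw [lintegral_dirac' _ hu, lintegral_dirac' _ hv, lintegral_dirac' _ hh]
  simpa only [smul_zero, add_zero] using H 0 0

namespace PrekopaLeindler

theorem prod {E F : Type*} [AddCommGroup E] [Module ℝ E] [MeasurableSpace E]
    [AddCommGroup F] [Module ℝ F] [MeasurableSpace F] {μ : Measure E} {ν : Measure F}
    [SFinite ν] (hμ : PrekopaLeindler μ) (hν : PrekopaLeindler ν) :
    PrekopaLeindler (μ.prod ν) := by
  intro a b ha hb hab u v h hu hv hh H
  rw [lintegral_prod _ hu.aemeasurable, lintegral_prod _ hv.aemeasurable,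
    lintegral_prod _ hh.aemeasurable]
  exact hμ ha hb hab hu.lintegral_prod_right' hv.lintegral_prod_right' hh.lintegral_prod_right'
    fun x y ↦ hν ha hb hab (hu.comp measurable_prodMk_left) (hv.comp measurable_prodMk_left)
      (hh.comp measurable_prodMk_left) fun x' y' ↦ H (x, x') (y, y')

theorem map {E F : Type*} [AddCommGroup E] [Module ℝ E] [MeasurableSpace E]
    [AddCommGroup F] [Module ℝ F] [MeasurableSpace F] {μ : Measure E} (hμ : PrekopaLeindler μ)
    (L : E →ₗ[ℝ] F) (hL : Measurable L) : PrekopaLeindler (μ.map L) := by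
  intro a b ha hb hab u v h hu hv hh H
  rw [lintegral_map hu hL, lintegral_map hv hL, lintegral_map hh hL]
  refine hμ ha hb hab (hu.comp hL) (hv.comp hL) (hh.comp hL) fun x y ↦ ?_
  simpa only [Function.comp_apply, map_add, map_smul] using H (L x) (L y)

theorem smul {E : Type*} [AddCommGroup E] [Module ℝ E] [MeasurableSpace E] {μ : Measure E}
    (hμ : PrekopaLeindler μ) (c : ℝ≥0∞) : PrekopaLeindler (c • μ) := by
  intro a b ha hb hab u v h hu hv hh H
  simp only [lintegral_smul_measure, smul_eq_mul]
  calc (c * ∫⁻ x, u x ∂μ) ^ a * (c * ∫⁻ y, v y ∂μ) ^ b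
      = c ^ (a + b) * ((∫⁻ x, u x ∂μ) ^ a * (∫⁻ y, v y ∂μ) ^ b) := by
        rw [ENNReal.mul_rpow_of_nonneg _ _ ha.le, ENNReal.mul_rpow_of_nonneg _ _ hb.le,
          ENNReal.rpow_add_of_nonneg _ _ ha.le hb.le]
        ring
    _ ≤ c * ∫⁻ z, h z ∂μ := by
        rw [hab, ENNReal.rpow_one]
        gcongr
        exact hμ ha hb hab hu hv hh H

end PrekopaLeindler

variable {E : Type*} [NormedAddCommGroup E] [NormedSpace ℝ E] [FiniteDimensional ℝ E]
  [MeasurableSpace E] [BorelSpace E]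

theorem exists_eq_smul_map_of_isAddHaarMeasure (μ : Measure E) [μ.IsAddHaarMeasure] {F : Type*}
    [NormedAddCommGroup F] [NormedSpace ℝ F] [FiniteDimensional ℝ F] [MeasurableSpace F]
    [BorelSpace F] (ν : Measure F) [ν.IsAddHaarMeasure] (e : F ≃L[ℝ] E) :
    ∃ c : ℝ≥0∞, μ = c • ν.map e := by
  have := e.isAddHaarMeasure_map ν
  exact ⟨_, Measure.isAddLeftInvariant_eq_smul μ (ν.map e)⟩

theorem prekopaLeindler_volume_pi (n : ℕ) : PrekopaLeindler (volume : Measure (Fin n → ℝ)) := by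
  induction n with
  | zero =>
    rw [volume_pi, Measure.pi_of_empty _ 0]
    exact prekopaLeindler_dirac_zero
  | succ n ih =>
    let e : (ℝ × (Fin n → ℝ)) ≃L[ℝ] (Fin (n + 1) → ℝ) := Fin.consEquivL ℝ fun _ ↦ ℝ
    obtain ⟨c, hc⟩ := exists_eq_smul_map_of_isAddHaarMeasure volume (volume.prod volume) e
    rw [hc]
    exact ((prekopaLeindler_volume_real.prod ih).map e.toLinearMap e.continuous.measurable).smul c

theorem prekopaLeindler_of_isAddHaarMeasure (μ : Measure E) [μ.IsAddHaarMeasure] :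
    PrekopaLeindler μ := by
  let e : (Fin (finrank ℝ E) → ℝ) ≃L[ℝ] E := (finBasis ℝ E).equivFunL.symm
  obtain ⟨c, hc⟩ := exists_eq_smul_map_of_isAddHaarMeasure μ volume e
  rw [hc]
  exact ((prekopaLeindler_volume_pi _).map e.toLinearMap e.continuous.measurable).smul c

end PrekopaLeindler

section Peakedness

/-- Measurable even log-concave functions. Log-concavity is stated multiplicatively, which allows
the values `0` and `∞`. -/
structure EvenLogConcave {E : Type*} [AddCommGroup E] [Module ℝ E] [MeasurableSpace E]
    (G : E → ℝ≥0∞) : Prop where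
  measurable : Measurable G
  logConcave : ∀ ⦃a b : ℝ⦄, 0 < a → 0 < b → a + b = 1 →
    ∀ x y, G x ^ a * G y ^ b ≤ G (a • x + b • y)
  even : ∀ x, G (-x) = G x

/-- Nonnegative functions on the line that are even and nonincreasing on `[0, ∞)`. -/
def SymmUnimodal (w : ℝ → ℝ≥0∞) : Prop :=
  ∀ ⦃s t : ℝ⦄, |s| ≤ |t| → w t ≤ w s

/-- `g` is at least as peaked around the origin as `f`: it has the larger integral against
every symmetric unimodal weight. -/
def LessPeaked (f g : ℝ → ℝ≥0∞) : Prop :=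
  ∀ ⦃w : ℝ → ℝ≥0∞⦄, SymmUnimodal w → ∫⁻ t, f t * w t ≤ ∫⁻ t, g t * w t

namespace EvenLogConcave

variable {E F : Type*} [AddCommGroup E] [Module ℝ E] [MeasurableSpace E]
  [AddCommGroup F] [Module ℝ F] [MeasurableSpace F] {G H : E → ℝ≥0∞}

theorem const (c : ℝ≥0∞) : EvenLogConcave fun _ : E ↦ c where
  measurable := measurable_const
  logConcave a b ha hb hab _ _ := by
    rw [← ENNReal.rpow_add_of_nonneg _ _ ha.le hb.le, hab, ENNReal.rpow_one]
  even _ := rfl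

theorem mul (hG : EvenLogConcave G) (hH : EvenLogConcave H) :
    EvenLogConcave fun x ↦ G x * H x where
  measurable := hG.measurable.mul hH.measurable
  logConcave a b ha hb hab x y := by
    rw [ENNReal.mul_rpow_of_nonneg _ _ ha.le, ENNReal.mul_rpow_of_nonneg _ _ hb.le,
      mul_mul_mul_comm]
    exact mul_le_mul' (hG.logConcave ha hb hab x y) (hH.logConcave ha hb hab x y)
  even x := by rw [hG.even, hH.even]

theorem prod {ι : Type*} (S : Finset ι) {G : ι → E → ℝ≥0∞} (hG : ∀ i, EvenLogConcave (G i)) :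
    EvenLogConcave fun x ↦ ∏ i ∈ S, G i x := by
  induction S using Finset.cons_induction with
  | empty => simpa only [Finset.prod_empty] using const 1
  | cons j S hj ih => simpa only [Finset.prod_cons] using (hG j).mul ih

theorem comp (hG : EvenLogConcave G) (L : F →ₗ[ℝ] E) (hL : Measurable L) :
    EvenLogConcave fun x ↦ G (L x) where
  measurable := hG.measurable.comp hL
  logConcave a b ha hb hab x y := by
    simpa only [map_add, map_smul] using hG.logConcave ha hb hab (L x) (L y)
  even x := by rw [map_neg, hG.even]

theorem lintegral_prod_right [MeasurableNeg F] {ν : Measure F} [SFinite ν] [ν.IsNegInvariant]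
    (hν : PrekopaLeindler ν) {G : E × F → ℝ≥0∞} (hG : EvenLogConcave G) :
    EvenLogConcave fun x ↦ ∫⁻ y, G (x, y) ∂ν where
  measurable := hG.measurable.lintegral_prod_right'
  logConcave a b ha hb hab x x' :=
    hν ha hb hab (hG.measurable.comp measurable_prodMk_left)
      (hG.measurable.comp measurable_prodMk_left) (hG.measurable.comp measurable_prodMk_left)
      fun y y' ↦ hG.logConcave ha hb hab (x, y) (x', y')
  even x := by
    rw [← lintegral_neg_eq_self]
    exact lintegral_congr fun y ↦ hG.even (x, y)

theorem symmUnimodal {w : ℝ → ℝ≥0∞} (hw : EvenLogConcave w) : SymmUnimodal w := by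
  intro s t hst
  rcases hst.eq_or_lt with heq | hlt
  · rcases abs_eq_abs.1 heq with rfl | rfl
    · exact le_rfl
    · exact (hw.even t).ge
  have ht₀ : t ≠ 0 := abs_pos.1 ((abs_nonneg s).trans_lt hlt)
  obtain ⟨hlo, hhi⟩ : -1 < s / t ∧ s / t < 1 :=
    abs_lt.1 (by rwa [abs_div, div_lt_one (abs_pos.2 ht₀)])
  have ha : 0 < (1 + s / t) / 2 := by linarith
  have hb : 0 < (1 - s / t) / 2 := by linarith
  have hab : (1 + s / t) / 2 + (1 - s / t) / 2 = 1 := by ring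
  calc w t = w t ^ ((1 + s / t) / 2) * w (-t) ^ ((1 - s / t) / 2) := by
        rw [hw.even, ← ENNReal.rpow_add_of_nonneg _ _ ha.le hb.le, hab, ENNReal.rpow_one]
    _ ≤ w (((1 + s / t) / 2) • t + ((1 - s / t) / 2) • -t) := hw.logConcave ha hb hab t (-t)
    _ = w s := by
        congr 1
        simp only [smul_eq_mul]
        field_simp
        ring

end EvenLogConcave

theorem SymmUnimodal.measurable {w : ℝ → ℝ≥0∞} (hw : SymmUnimodal w) : Measurable w := by
  have hanti : Antitone fun t ↦ w (max t 0) := fun s t hst ↦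
    hw (by simpa only [abs_of_nonneg (le_max_right _ (0 : ℝ))] using max_le_max_right 0 hst)
  have habs : w = (fun t ↦ w (max t 0)) ∘ fun t ↦ |t| := by
    ext t
    exact le_antisymm (hw (by simp)) (hw (by simp))
  rw [habs]
  exact hanti.measurable.comp measurable_id.abs

theorem SymmUnimodal.min_const {w : ℝ → ℝ≥0∞} (hw : SymmUnimodal w) (c : ℝ≥0∞) :
    SymmUnimodal fun t ↦ min (w t) c :=
  fun _ _ hst ↦ min_le_min_right c (hw hst)

section Crossing

variable {f g w : ℝ → ℝ≥0∞} {r : ℝ}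

theorem lintegral_mul_le_of_crossing (hf : Measurable f) (hg : Measurable g)
    (hfg : ∫⁻ t, f t ≤ ∫⁻ t, g t) (hf_top : ∫⁻ t, f t ≠ ∞) (hr : 0 ≤ r)
    (hle : ∀ t, |t| ≤ r → f t ≤ g t) (hge : ∀ t, r < |t| → g t ≤ f t)
    (hw : SymmUnimodal w) (hwr : w r ≠ ∞) : ∫⁻ t, f t * w t ≤ ∫⁻ t, g t * w t := by
  -- Equivalently `(g t - f t) * (w t - w r) ≥ 0`, written without subtraction.
  have rearrange (t : ℝ) : f t * w t + g t * w r ≤ g t * w t + f t * w r := by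
    rcases le_or_gt |t| r with ht | ht
    · obtain ⟨d, hd⟩ := exists_add_of_le (hle t ht)
      obtain ⟨e, he⟩ := exists_add_of_le (hw (s := t) (t := r) (by rwa [abs_of_nonneg hr]))
      rw [hd, he]
      calc _ ≤ f t * (w r + e) + (f t + d) * w r + d * e := le_self_add
        _ = _ := by ring
    · obtain ⟨d, hd⟩ := exists_add_of_le (hge t ht)
      have hrt : |r| ≤ |t| := (abs_of_nonneg hr).trans_le ht.le
      obtain ⟨e, he⟩ := exists_add_of_le (hw hrt)
      rw [hd, he]
      calc _ ≤ (g t + d) * w t + g t * (w t + e) + d * e := le_self_add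
        _ = _ := by ring
  have hw_meas := hw.measurable
  refine (ENNReal.add_le_add_iff_right (ENNReal.mul_ne_top hf_top hwr)).1 ?_
  calc (∫⁻ t, f t * w t) + (∫⁻ t, f t) * w r ≤ (∫⁻ t, f t * w t) + (∫⁻ t, g t) * w r := by gcongr
    _ = ∫⁻ t, f t * w t + g t * w r := by
        rw [lintegral_add_left (by fun_prop), lintegral_mul_const _ hg]
    _ ≤ ∫⁻ t, g t * w t + f t * w r := lintegral_mono rearrange
    _ = (∫⁻ t, g t * w t) + (∫⁻ t, f t) * w r := by
        rw [lintegral_add_left (by fun_prop), lintegral_mul_const _ hf]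

theorem lessPeaked_of_crossing (hf : Measurable f) (hg : Measurable g)
    (hfg : ∫⁻ t, f t ≤ ∫⁻ t, g t) (hf_top : ∫⁻ t, f t ≠ ∞) (hr : 0 ≤ r)
    (hle : ∀ t, |t| ≤ r → f t ≤ g t) (hge : ∀ t, r < |t| → g t ≤ f t) : LessPeaked f g := by
  intro w hw
  have truncation (t : ℝ) : f t * w t = ⨆ n : ℕ, f t * min (w t) n := by
    rw [← ENNReal.mul_iSup, ← inf_iSup_eq, ENNReal.iSup_natCast, inf_top_eq]
  have lintegral_truncation : ∫⁻ t, f t * w t = ⨆ n : ℕ, ∫⁻ t, f t * min (w t) n := by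
    simp only [truncation]
    refine lintegral_iSup (fun n ↦ hf.mul (hw.min_const n).measurable) fun m n hmn t ↦ ?_
    dsimp only
    gcongr
  rw [lintegral_truncation]
  refine iSup_le fun n ↦ (lintegral_mul_le_of_crossing hf hg hfg hf_top hr hle hge
    (hw.min_const n) (by simp)).trans (lintegral_mono fun t ↦ ?_)
  gcongr
  exact min_le_left _ _

end Crossing

variable {E : Type*} [NormedAddCommGroup E] [NormedSpace ℝ E]

theorem exists_equiv_prod_ker (l : E →L[ℝ] ℝ) (hl : l ≠ 0) :
    ∃ e : (ℝ × l.ker) ≃L[ℝ] E, ∀ z, l (e z) = z.1 := by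
  obtain ⟨v, hv⟩ := l.toLinearMap.surjective (by exact_mod_cast hl) 1
  let e : E ≃L[ℝ] ℝ × l.ker :=
    .equivOfRightInverse l (.toSpanSingleton ℝ v) fun t ↦ by simp [show l v = 1 from hv]
  have fst_e (x : E) : (e x).1 = l x := by simp [e]
  exact ⟨e.symm, fun z ↦ by rw [← fst_e, e.apply_symm_apply]⟩

variable [FiniteDimensional ℝ E] [MeasurableSpace E] [BorelSpace E] (μ : Measure E)
  [μ.IsAddHaarMeasure]

theorem exists_evenLogConcave_marginal {l : E →L[ℝ] ℝ} (hl : l ≠ 0) {G : E → ℝ≥0∞}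
    (hG : EvenLogConcave G) :
    ∃ w : ℝ → ℝ≥0∞, EvenLogConcave w ∧
      ∀ f, Measurable f → ∫⁻ x, f (l x) * G x ∂μ = ∫⁻ t, f t * w t := by
  obtain ⟨e, hle⟩ := exists_equiv_prod_ker l hl
  let ν : Measure l.ker := Measure.addHaar
  obtain ⟨c, hc⟩ := exists_eq_smul_map_of_isAddHaarMeasure μ (volume.prod ν) e
  have he : Measurable e := e.continuous.measurable
  have hGe : EvenLogConcave fun z ↦ G (e z) := hG.comp e.toLinearMap he
  have hmarg := hGe.lintegral_prod_right (prekopaLeindler_of_isAddHaarMeasure ν)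
  refine ⟨_, (EvenLogConcave.const c).mul hmarg, fun f hf ↦ ?_⟩
  have hfG : Measurable fun x ↦ f (l x) * G x :=
    (hf.comp l.continuous.measurable).mul hG.measurable
  calc ∫⁻ x, f (l x) * G x ∂μ
      = c * ∫⁻ z, f (l (e z)) * G (e z) ∂volume.prod ν := by
        rw [hc, lintegral_smul_measure, lintegral_map hfG he, smul_eq_mul]
    _ = c * ∫⁻ t, ∫⁻ y, f t * G (e (t, y)) ∂ν := by
        rw [lintegral_prod (fun z ↦ f (l (e z)) * G (e z)) (hfG.comp he).aemeasurable]
        simp only [hle]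
    _ = c * ∫⁻ t, f t * ∫⁻ y, G (e (t, y)) ∂ν := by
        congr! with t
        exact lintegral_const_mul _ (hGe.measurable.comp measurable_prodMk_left)
    _ = ∫⁻ t, f t * (c * ∫⁻ y, G (e (t, y)) ∂ν) := by
        simp only [mul_left_comm _ c]
        exact (lintegral_const_mul _ (hf.mul hmarg.measurable)).symm

theorem lintegral_comp_mul_le_of_lessPeaked (l : E →L[ℝ] ℝ) {f g : ℝ → ℝ≥0∞} (hf : Measurable f)
    (hg : Measurable g) (hfg : LessPeaked f g) (hfg₀ : f 0 ≤ g 0) {G : E → ℝ≥0∞}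
    (hG : EvenLogConcave G) : ∫⁻ x, f (l x) * G x ∂μ ≤ ∫⁻ x, g (l x) * G x ∂μ := by
  rcases eq_or_ne l 0 with rfl | hl
  · exact lintegral_mono fun x ↦ mul_le_mul_left hfg₀ (G x)
  · obtain ⟨w, hw, marginal⟩ := exists_evenLogConcave_marginal μ hl hG
    rw [marginal f hf, marginal g hg]
    exact hfg hw.symmUnimodal

theorem lintegral_prod_comp_mul_le_of_lessPeaked {ι : Type*} (S : Finset ι) (l : ι → E →L[ℝ] ℝ)
    {f g : ι → ℝ → ℝ≥0∞} (hf : ∀ i, EvenLogConcave (f i)) (hg : ∀ i, EvenLogConcave (g i))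
    (hfg : ∀ i, LessPeaked (f i) (g i)) (hfg₀ : ∀ i, f i 0 ≤ g i 0) {G : E → ℝ≥0∞}
    (hG : EvenLogConcave G) :
    ∫⁻ x, (∏ i ∈ S, f i (l i x)) * G x ∂μ ≤ ∫⁻ x, (∏ i ∈ S, g i (l i x)) * G x ∂μ := by
  have evenLogConcave_comp {h : ι → ℝ → ℝ≥0∞} (hh : ∀ i, EvenLogConcave (h i)) (i : ι) :
      EvenLogConcave fun x ↦ h i (l i x) :=
    (hh i).comp (l i).toLinearMap (l i).continuous.measurable
  induction S using Finset.cons_induction generalizing G with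
  | empty => simp
  | cons j S hj ih =>
    calc ∫⁻ x, (∏ i ∈ S.cons j hj, f i (l i x)) * G x ∂μ
        = ∫⁻ x, f j (l j x) * ((∏ i ∈ S, f i (l i x)) * G x) ∂μ := by
          simp only [Finset.prod_cons, mul_assoc]
      _ ≤ ∫⁻ x, g j (l j x) * ((∏ i ∈ S, f i (l i x)) * G x) ∂μ :=
          lintegral_comp_mul_le_of_lessPeaked μ (l j) (hf j).measurable (hg j).measurable
            (hfg j) (hfg₀ j) ((EvenLogConcave.prod S (evenLogConcave_comp hf)).mul hG)
      _ = ∫⁻ x, (∏ i ∈ S, f i (l i x)) * (g j (l j x) * G x) ∂μ := by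
          simp only [mul_left_comm]
      _ ≤ ∫⁻ x, (∏ i ∈ S, g i (l i x)) * (g j (l j x) * G x) ∂μ :=
          ih ((evenLogConcave_comp hg j).mul hG)
      _ = ∫⁻ x, (∏ i ∈ S.cons j hj, g i (l i x)) * G x ∂μ := by
          simp only [Finset.prod_cons, mul_assoc, mul_left_comm]

end Peakedness

section Density

/-- The function `exp (-s ^ p)` of `s ≥ 0`, where `exp (-s ^ ∞)` stands for the indicator function
of `s ≤ 1`. -/
noncomputable def expNegPow (p : ℝ≥0∞) (s : ℝ) : ℝ≥0∞ :=
  if p = ∞ then if s ≤ 1 then 1 else 0 else ENNReal.ofReal (Real.exp (-s ^ p.toReal))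

theorem expNegPow_top (s : ℝ) : expNegPow ∞ s = if s ≤ 1 then 1 else 0 := if_pos rfl

theorem expNegPow_of_ne_top {p : ℝ≥0∞} (hp : p ≠ ∞) (s : ℝ) :
    expNegPow p s = ENNReal.ofReal (Real.exp (-s ^ p.toReal)) := if_neg hp

theorem measurable_expNegPow (p : ℝ≥0∞) : Measurable (expNegPow p) := by
  rcases eq_or_ne p ∞ with rfl | hp
  · simp only [funext expNegPow_top]
    exact Measurable.ite measurableSet_Iic measurable_const measurable_const
  · simp only [funext (expNegPow_of_ne_top hp)]
    fun_prop

theorem expNegPow_zero {p : ℝ≥0∞} (hp : p ≠ 0) : expNegPow p 0 = 1 := by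
  rcases eq_or_ne p ∞ with rfl | hp'
  · simp [expNegPow_top]
  · simp [expNegPow_of_ne_top hp', Real.zero_rpow (ENNReal.toReal_pos hp hp').ne']

theorem expNegPow_le_one (p : ℝ≥0∞) {s : ℝ} (hs : 0 ≤ s) : expNegPow p s ≤ 1 := by
  unfold expNegPow
  split_ifs
  · exact le_rfl
  · exact zero_le
  · rw [ENNReal.ofReal_le_one, Real.exp_le_one_iff, neg_nonpos]
    positivity

theorem expNegPow_anti (p : ℝ≥0∞) {s t : ℝ} (hs : 0 ≤ s) (hst : s ≤ t) :
    expNegPow p t ≤ expNegPow p s := by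
  unfold expNegPow
  split_ifs with _ ht hs'
  · exact le_rfl
  · exact absurd (hst.trans ht) hs'
  · exact zero_le_one
  · exact le_rfl
  · gcongr

theorem expNegPow_rpow_mul_le {p : ℝ≥0∞} (hp : 1 ≤ p) {a b s t : ℝ} (ha : 0 < a) (hb : 0 < b)
    (hab : a + b = 1) (hs : 0 ≤ s) (ht : 0 ≤ t) :
    expNegPow p s ^ a * expNegPow p t ^ b ≤ expNegPow p (a * s + b * t) := by
  rcases eq_or_ne p ∞ with rfl | hp'
  · simp only [expNegPow_top]
    split_ifs with hs' ht' hst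
    any_goals simp [ha, hb]
    nlinarith
  · have convex : (a * s + b * t) ^ p.toReal ≤ a * s ^ p.toReal + b * t ^ p.toReal :=
      (convexOn_rpow (by simpa using ENNReal.toReal_mono hp' hp)).2 hs ht ha.le hb.le hab
    simp only [expNegPow_of_ne_top hp']
    rw [ENNReal.ofReal_rpow_of_pos (Real.exp_pos _), ENNReal.ofReal_rpow_of_pos (Real.exp_pos _),
      ← ENNReal.ofReal_mul (by positivity), ← Real.exp_mul, ← Real.exp_mul, ← Real.exp_add]
    gcongr
    linarith

theorem evenLogConcave_expNegPow_norm {E : Type*} [NormedAddCommGroup E] [NormedSpace ℝ E]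
    [MeasurableSpace E] [OpensMeasurableSpace E] {p : ℝ≥0∞} (hp : 1 ≤ p) :
    EvenLogConcave fun x : E ↦ expNegPow p ‖x‖ where
  measurable := (measurable_expNegPow p).comp measurable_norm
  logConcave a b ha hb hab x y := by
    refine (expNegPow_rpow_mul_le hp ha hb hab (norm_nonneg x) (norm_nonneg y)).trans
      (expNegPow_anti p (norm_nonneg _) ?_)
    simpa only [norm_smul_of_nonneg ha.le, norm_smul_of_nonneg hb.le] using
      norm_add_le (a • x) (b • y)
  even x := by rw [norm_neg]

theorem prod_expNegPow_norm {ι : Type*} [Fintype ι] {p : ℝ≥0∞} [Fact (1 ≤ p)]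
    (x : PiLp p fun _ : ι ↦ ℝ) : ∏ i, expNegPow p ‖x i‖ = expNegPow p ‖x‖ := by
  have hp₀ : p ≠ 0 := (zero_lt_one.trans_le Fact.out).ne'
  rcases eq_or_ne p ∞ with rfl | hp
  · simp only [expNegPow_top, Finset.prod_ite_zero, Finset.prod_const_one, Finset.mem_univ,
      forall_const]
    congr 1
    rw [← PiLp.norm_ofLp, pi_norm_le_iff_of_nonneg zero_le_one]
  · have hP : 0 < p.toReal := ENNReal.toReal_pos hp₀ hp
    simp only [expNegPow_of_ne_top hp]
    rw [← ENNReal.ofReal_prod_of_nonneg fun i _ ↦ (Real.exp_pos _).le, ← Real.exp_sum,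
      Finset.sum_neg_distrib, PiLp.norm_eq_sum hP, one_div, Real.rpow_inv_rpow _ hP.ne']
    positivity

theorem exists_rpow_crossing {a b P Q : ℝ} (ha : 0 < a) (hb : 0 < b) (hP : 0 < P) (hPQ : P < Q) :
    ∃ r, 0 ≤ r ∧ (∀ s, 0 ≤ s → s ≤ r → (b * s) ^ Q ≤ (a * s) ^ P) ∧
      ∀ s, r < s → (a * s) ^ P ≤ (b * s) ^ Q := by
  have hQP : 0 < Q - P := sub_pos.2 hPQ
  set r := (a ^ P / b ^ Q) ^ (Q - P)⁻¹
  have hr_pow : r ^ (Q - P) = a ^ P / b ^ Q := Real.rpow_inv_rpow (by positivity) hQP.ne'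
  have factor_left {s : ℝ} (hs : 0 ≤ s) : (a * s) ^ P = b ^ Q * s ^ P * r ^ (Q - P) := by
    rw [Real.mul_rpow ha.le hs, hr_pow]
    field_simp
  have factor_right {s : ℝ} (hs : 0 ≤ s) : (b * s) ^ Q = b ^ Q * s ^ P * s ^ (Q - P) := by
    rw [Real.mul_rpow hb.le hs, mul_assoc, ← Real.rpow_add_of_nonneg hs hP.le hQP.le,
      add_sub_cancel]
  have hr₀ : 0 ≤ r := by positivity
  refine ⟨r, hr₀, fun s hs hsr ↦ ?_, fun s hrs ↦ ?_⟩
  · rw [factor_left hs, factor_right hs]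
    gcongr
  · have hs : 0 ≤ s := hr₀.trans hrs.le
    rw [factor_left hs, factor_right hs]
    gcongr

theorem exists_expNegPow_crossing {p q : ℝ≥0∞} (hp : p ≠ 0) (hpq : p < q) {a b : ℝ} (ha : 0 < a)
    (hb : 0 < b) :
    ∃ r, 0 ≤ r ∧ (∀ s, 0 ≤ s → s ≤ r → expNegPow p (a * s) ≤ expNegPow q (b * s)) ∧
      ∀ s, r < s → expNegPow q (b * s) ≤ expNegPow p (a * s) := by
  rcases eq_or_ne q ∞ with rfl | hq
  · refine ⟨b⁻¹, by positivity, fun s hs hsr ↦ ?_, fun s hrs ↦ ?_⟩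
    · rw [expNegPow_top, if_pos ((le_inv_mul_iff₀ hb).1 (by rwa [mul_one]))]
      exact expNegPow_le_one p (by positivity)
    · rw [expNegPow_top, if_neg ((inv_mul_lt_iff₀ hb).1 (by rwa [mul_one])).not_ge]
      exact zero_le
  · obtain ⟨r, hr, hle, hge⟩ := exists_rpow_crossing ha hb (ENNReal.toReal_pos hp hpq.ne_top)
      (ENNReal.toReal_strict_mono hq hpq)
    simp only [expNegPow_of_ne_top hq, expNegPow_of_ne_top hpq.ne_top]
    exact ⟨r, hr, fun s hs hsr ↦ by gcongr; exact hle s hs hsr,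
      fun s hrs ↦ by gcongr; exact hge s hrs⟩

section NormLintegral

variable {E F : Type*} [NormedAddCommGroup E] [NormedSpace ℝ E] [FiniteDimensional ℝ E]
  [Nontrivial E] [MeasurableSpace E] [BorelSpace E] (μ : Measure E) [μ.IsAddHaarMeasure]
  [NormedAddCommGroup F] [NormedSpace ℝ F] {L : E →ₗ[ℝ] F}

theorem measure_norm_le_one_eq_integral_div_Gamma (hL : Function.Injective L) {P : ℝ}
    (hP : 0 < P) :
    μ {x | ‖L x‖ ≤ 1} =
      ENNReal.ofReal ((∫ x, Real.exp (-‖L x‖ ^ P) ∂μ) / Real.Gamma (finrank ℝ E / P + 1)) := by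
  have norm_zero : ‖L 0‖ = 0 := by simp
  have norm_neg (x : E) : ‖L (-x)‖ = ‖L x‖ := by simp
  have norm_add (x y : E) : ‖L (x + y)‖ ≤ ‖L x‖ + ‖L y‖ := by simpa using norm_add_le (L x) (L y)
  have eq_zero {x : E} (hx : ‖L x‖ = 0) : x = 0 := (map_eq_zero_iff L hL).1 (norm_eq_zero.1 hx)
  have norm_smul (r : ℝ) (x : E) : ‖L (r • x)‖ ≤ |r| * ‖L x‖ := by simp [_root_.norm_smul]
  rw [measure_le_eq_lt μ norm_zero norm_neg norm_add eq_zero norm_smul 1]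
  exact measure_lt_one_eq_integral_div_gamma μ norm_zero norm_neg norm_add eq_zero norm_smul hP

theorem integrable_exp_neg_norm_rpow (hL : Function.Injective L) {P : ℝ} (hP : 0 < P) :
    Integrable (fun x ↦ Real.exp (-‖L x‖ ^ P)) μ := by
  by_contra h
  have pos : 0 < μ {x | ‖L x‖ < 1} :=
    (isOpen_lt L.continuous_of_finiteDimensional.norm continuous_const).measure_pos μ
      ⟨0, by simp⟩
  have null : μ {x | ‖L x‖ ≤ 1} = 0 := by
    simp [measure_norm_le_one_eq_integral_div_Gamma μ hL hP, integral_undef h]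
  exact pos.ne' (measure_mono_null (fun x (hx : ‖L x‖ < 1) ↦ hx.le) null)

theorem lintegral_expNegPow_norm (hL : Function.Injective L) {p : ℝ≥0∞} (hp : p ≠ 0) :
    ∫⁻ x, expNegPow p ‖L x‖ ∂μ =
      ENNReal.ofReal (Real.Gamma (finrank ℝ E * p⁻¹.toReal + 1)) * μ {x | ‖L x‖ ≤ 1} := by
  have hL_cont : Continuous L := L.continuous_of_finiteDimensional
  rcases eq_or_ne p ∞ with rfl | hp'
  · have hmeas : MeasurableSet {x | ‖L x‖ ≤ 1} :=
      measurableSet_le hL_cont.norm.measurable measurable_const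
    simpa [expNegPow_top, indicator_apply] using lintegral_indicator_one (μ := μ) hmeas
  · have hP : 0 < p.toReal := ENNReal.toReal_pos hp hp'
    have hΓ : 0 < Real.Gamma (finrank ℝ E / p.toReal + 1) := Real.Gamma_pos_of_pos (by positivity)
    simp only [expNegPow_of_ne_top hp']
    rw [← ofReal_integral_eq_lintegral_ofReal (integrable_exp_neg_norm_rpow μ hL hP)
      (.of_forall fun x ↦ (Real.exp_pos _).le), ENNReal.toReal_inv, ← div_eq_mul_inv,
      measure_norm_le_one_eq_integral_div_Gamma μ hL hP, ← ENNReal.ofReal_mul hΓ.le,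
      mul_div_cancel₀ _ hΓ.ne']

theorem lintegral_expNegPow_mul_norm (hL : Function.Injective L) {p : ℝ≥0∞} (hp : p ≠ 0) {c : ℝ}
    (hc : 0 < c) :
    ∫⁻ x, expNegPow p (c * ‖L x‖) ∂μ =
      ENNReal.ofReal (Real.Gamma (finrank ℝ E * p⁻¹.toReal + 1) / c ^ finrank ℝ E) *
        μ {x | ‖L x‖ ≤ 1} := by
  have norm_smul_apply (x : E) : ‖(c • L) x‖ = c * ‖L x‖ := norm_smul_of_nonneg hc.le (L x)
  have dilate : {x | ‖(c • L) x‖ ≤ 1} = (c • ·) ⁻¹' {x | ‖L x‖ ≤ 1} := by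
    ext x
    simp
  have key := lintegral_expNegPow_norm μ (L := c • L) ((smul_right_injective F hc.ne').comp hL) hp
  rw [dilate, Measure.addHaar_preimage_smul μ hc.ne', ← mul_assoc, ← ENNReal.ofReal_mul
    (Real.Gamma_nonneg_of_nonneg (by positivity)), abs_of_pos (by positivity)] at key
  simpa only [norm_smul_apply, div_eq_mul_inv] using key

end NormLintegral

/-- The normalizing factor `2 Γ(1/p + 1) = ∫ exp (-|t| ^ p) dt`, equal to `2` for `p = ∞`. -/
noncomputable def lpNormalizer (p : ℝ≥0∞) : ℝ := 2 * Real.Gamma (p⁻¹.toReal + 1)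

/-- The dilate of `exp (-|t| ^ p)` that is a probability density on the line. -/
noncomputable def lpDensity (p : ℝ≥0∞) (t : ℝ) : ℝ≥0∞ := expNegPow p (lpNormalizer p * |t|)

theorem lpNormalizer_pos (p : ℝ≥0∞) : 0 < lpNormalizer p :=
  mul_pos two_pos (Real.Gamma_pos_of_pos (by positivity))

theorem evenLogConcave_lpDensity {p : ℝ≥0∞} (hp : 1 ≤ p) : EvenLogConcave (lpDensity p) := by
  have := (evenLogConcave_expNegPow_norm (E := ℝ) hp).comp
    (LinearMap.lsmul ℝ ℝ (lpNormalizer p)) (by fun_prop)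
  unfold lpDensity
  simpa [abs_of_pos (lpNormalizer_pos p)] using this

theorem lpDensity_zero {p : ℝ≥0∞} (hp : p ≠ 0) : lpDensity p 0 = 1 := by
  simp [lpDensity, expNegPow_zero hp]

theorem lintegral_lpDensity {p : ℝ≥0∞} (hp : p ≠ 0) : ∫⁻ t, lpDensity p t = 1 := by
  have unit_interval : {t : ℝ | ‖t‖ ≤ 1} = Icc (-1) 1 := by
    ext t
    simp [abs_le]
  have key := lintegral_expNegPow_mul_norm volume (L := (LinearMap.id : ℝ →ₗ[ℝ] ℝ))
    Function.injective_id hp (lpNormalizer_pos p)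
  have hΓ : 0 < Real.Gamma (p⁻¹.toReal + 1) := Real.Gamma_pos_of_pos (by positivity)
  simp only [LinearMap.id_apply, unit_interval, Real.volume_Icc, finrank_self, Nat.cast_one,
    one_mul, pow_one] at key
  refine key.trans ?_
  rw [← ENNReal.ofReal_mul (div_pos hΓ (lpNormalizer_pos p)).le, lpNormalizer,
    ENNReal.ofReal_eq_one]
  field_simp
  norm_num

theorem lessPeaked_lpDensity {p q : ℝ≥0∞} (hp : p ≠ 0) (hpq : p ≤ q) :
    LessPeaked (lpDensity p) (lpDensity q) := by
  rcases hpq.eq_or_lt with rfl | hlt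
  · exact fun w _ ↦ le_rfl
  have measurable_lpDensity (r : ℝ≥0∞) : Measurable (lpDensity r) :=
    (measurable_expNegPow r).comp (by fun_prop)
  have hq : q ≠ 0 := (pos_iff_ne_zero.2 hp |>.trans hlt).ne'
  obtain ⟨r, hr, hle, hge⟩ :=
    exists_expNegPow_crossing hp hlt (lpNormalizer_pos p) (lpNormalizer_pos q)
  refine lessPeaked_of_crossing (measurable_lpDensity p) (measurable_lpDensity q) ?_ ?_ hr
    (fun t ht ↦ hle |t| (abs_nonneg t) ht) fun t ht ↦ hge |t| ht
  · rw [lintegral_lpDensity hp, lintegral_lpDensity hq]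
  · rw [lintegral_lpDensity hp]
    exact ENNReal.one_ne_top

end Density

section LpBall

/-- The identity of `ℝ^n`, seen as a linear map from the Euclidean space onto `ℓ_p^n`. -/
noncomputable def euclideanToPiLp (n : ℕ) (p : ℝ≥0∞) :
    EuclideanSpace ℝ (Fin n) ≃ₗ[ℝ] PiLp p fun _ : Fin n ↦ ℝ :=
  (WithLp.linearEquiv 2 ℝ (Fin n → ℝ)).trans (WithLp.linearEquiv p ℝ (Fin n → ℝ)).symm

theorem mem_lpBall_iff {n : ℕ} {p : ℝ≥0∞} [hp : Fact (1 ≤ p)] {x : EuclideanSpace ℝ (Fin n)} :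
    x ∈ lpBall n p ↔ ‖euclideanToPiLp n p x‖ ≤ 1 := by
  rcases eq_or_ne p ∞ with rfl | hp'
  · rw [← PiLp.norm_ofLp, pi_norm_le_iff_of_nonneg zero_le_one]
    simp [lpBall, euclideanToPiLp]
  · have hP : 0 < p.toReal := ENNReal.toReal_pos (zero_lt_one.trans_le hp.out).ne' hp'
    rw [PiLp.norm_eq_sum hP, one_div, Real.rpow_inv_le_iff_of_pos (by positivity) zero_le_one hP,
      Real.one_rpow]
    simp [lpBall, euclideanToPiLp, hp']

theorem volume_lpBall {n : ℕ} (hn : n ≠ 0) {p : ℝ≥0∞} (hp : 1 ≤ p) :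
    volume (lpBall n p) =
      ENNReal.ofReal (lpNormalizer p ^ n / Real.Gamma (n * p⁻¹.toReal + 1)) := by
  have : Nonempty (Fin n) := ⟨0, Nat.pos_of_ne_zero hn⟩
  rw [← (PiLp.volume_preserving_toLp (Fin n)).measure_preimage_emb
    (MeasurableEquiv.toLp 2 (Fin n → ℝ)).measurableEmbedding]
  rcases eq_or_ne p ∞ with rfl | hp'
  · have cube : WithLp.toLp 2 ⁻¹' lpBall n ∞ = Icc (fun _ ↦ -1) (fun _ ↦ 1) := by
      ext x
      simp [lpBall, abs_le, Pi.le_def, forall_and]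
    rw [cube, Real.volume_Icc_pi]
    norm_num [lpNormalizer]
  · have : Fact (1 ≤ p) := ⟨hp⟩
    have hP : 1 ≤ p.toReal := by simpa using ENNReal.toReal_mono hp' hp
    have ball : WithLp.toLp 2 ⁻¹' lpBall n p =
        {x : Fin n → ℝ | (∑ i, |x i| ^ p.toReal) ^ (1 / p.toReal) ≤ 1} := by
      ext x
      simp [mem_lpBall_iff, PiLp.norm_eq_sum (zero_lt_one.trans_le hP), euclideanToPiLp]
    rw [ball, volume_sum_rpow_le (Fin n) hP 1]
    simp [lpNormalizer, div_eq_mul_inv]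

variable {E : Type*} [NormedAddCommGroup E] [NormedSpace ℝ E] [FiniteDimensional ℝ E]
  [MeasurableSpace E] (μ : Measure E) {n : ℕ} {p : ℝ≥0∞}
  {L : E →ₗ[ℝ] EuclideanSpace ℝ (Fin n)}

theorem measure_preimage_lpBall_lt_top [IsFiniteMeasureOnCompacts μ]
    (hL : Function.Injective L) (hp : 1 ≤ p) :
    μ (L ⁻¹' lpBall n p) < ∞ := by
  have : Fact (1 ≤ p) := ⟨hp⟩
  have hM : Topology.IsClosedEmbedding (euclideanToPiLp n p ∘ L) :=
    LinearMap.isClosedEmbedding_of_injective (f := (euclideanToPiLp n p).toLinearMap ∘ₗ L)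
      (LinearMap.ker_eq_bot.2 ((euclideanToPiLp n p).injective.comp hL))
  have hball : L ⁻¹' lpBall n p = (euclideanToPiLp n p ∘ L) ⁻¹' Metric.closedBall 0 1 := by
    ext x
    simp [mem_lpBall_iff]
  rw [hball]
  exact (hM.isCompact_preimage (isCompact_closedBall 0 1)).measure_lt_top

variable [BorelSpace E] [μ.IsAddHaarMeasure] [Nontrivial E]

theorem lintegral_prod_lpDensity (hL : Function.Injective L) (hp : 1 ≤ p) :
    ∫⁻ x, ∏ i, lpDensity p (L x i) ∂μ =
      ENNReal.ofReal (Real.Gamma (finrank ℝ E * p⁻¹.toReal + 1) / lpNormalizer p ^ finrank ℝ E) *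
        μ (L ⁻¹' lpBall n p) := by
  have : Fact (1 ≤ p) := ⟨hp⟩
  have hc := lpNormalizer_pos p
  let M : E →ₗ[ℝ] PiLp p fun _ : Fin n ↦ ℝ := (euclideanToPiLp n p).toLinearMap ∘ₗ L
  have hM : Function.Injective M := (euclideanToPiLp n p).injective.comp hL
  have prod_eq (x : E) : ∏ i, lpDensity p (L x i) = expNegPow p (lpNormalizer p * ‖M x‖) := by
    rw [← norm_smul_of_nonneg hc.le, ← prod_expNegPow_norm]
    simp [lpDensity, M, euclideanToPiLp, abs_of_pos hc]
  simp only [prod_eq]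
  rw [lintegral_expNegPow_mul_norm μ hM (zero_lt_one.trans_le hp).ne' hc]
  congr 2
  ext x
  exact mem_lpBall_iff.symm

theorem measure_preimage_lpBall_div_volume_lpBall (hL : Function.Injective L) (hp : 1 ≤ p) :
    μ (L ⁻¹' lpBall n p) / volume (lpBall (finrank ℝ E) p) =
      ∫⁻ x, ∏ i, lpDensity p (L x i) ∂μ := by
  have hc := lpNormalizer_pos p
  have hΓ : 0 < Real.Gamma (finrank ℝ E * p⁻¹.toReal + 1) := Real.Gamma_pos_of_pos (by positivity)
  rw [volume_lpBall finrank_pos.ne' hp, lintegral_prod_lpDensity μ hL hp, ENNReal.div_eq_inv_mul,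
    ← ENNReal.ofReal_inv_of_pos (div_pos (pow_pos hc _) hΓ), inv_div]

theorem measure_preimage_lpBall_div_volume_lpBall_mono (hL : Function.Injective L) {q : ℝ≥0∞}
    (hp : 1 ≤ p) (hpq : p ≤ q) :
    μ (L ⁻¹' lpBall n p) / volume (lpBall (finrank ℝ E) p) ≤
      μ (L ⁻¹' lpBall n q) / volume (lpBall (finrank ℝ E) q) := by
  have hq : 1 ≤ q := hp.trans hpq
  have hp₀ : p ≠ 0 := (zero_lt_one.trans_le hp).ne'
  have hq₀ : q ≠ 0 := (zero_lt_one.trans_le hq).ne'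
  let l (i : Fin n) : E →L[ℝ] ℝ := EuclideanSpace.proj i ∘L L.toContinuousLinearMap
  have key := lintegral_prod_comp_mul_le_of_lessPeaked μ Finset.univ l
    (fun _ ↦ evenLogConcave_lpDensity hp) (fun _ ↦ evenLogConcave_lpDensity hq)
    (fun _ ↦ lessPeaked_lpDensity hp₀ hpq)
    (fun _ ↦ by rw [lpDensity_zero hp₀, lpDensity_zero hq₀]) (EvenLogConcave.const 1)
  simpa [measure_preimage_lpBall_div_volume_lpBall μ hL, hp, hq, l] using key

end LpBall

theorem meyer_pajor_sections (k n : ℕ) (hk : 0 < k) (hkn : k ≤ n)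
    (U : Submodule ℝ (EuclideanSpace ℝ (Fin n))) (hU : Module.finrank ℝ U = k)
    (p q : ℝ≥0∞) (hp : 1 ≤ p) (hpq : p ≤ q) :
    (μH[(k : ℝ)] (lpBall n p ∩ (U : Set (EuclideanSpace ℝ (Fin n))))).toReal /
        (volume (lpBall k p)).toReal
      ≤ (μH[(k : ℝ)] (lpBall n q ∩ (U : Set (EuclideanSpace ℝ (Fin n))))).toReal /
        (volume (lpBall k q)).toReal := by
  subst hU
  have : Nontrivial U := nontrivial_of_finrank_pos hk
  have hU_inj : Function.Injective U.subtype := U.injective_subtype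
  have hq : 1 ≤ q := hp.trans hpq
  let μ : Measure U := μH[(finrank ℝ U : ℝ)]
  have hausdorff_inter (r : ℝ≥0∞) :
      μH[(finrank ℝ U : ℝ)] (lpBall n r ∩ U) = μ (U.subtype ⁻¹' lpBall n r) := by
    rw [← U.subtypeₗᵢ.isometry.hausdorffMeasure_image (.inl (by positivity))]
    congr 1
    ext x
    simp
  simp only [hausdorff_inter, ← ENNReal.toReal_div]
  refine ENNReal.toReal_mono ?_ (measure_preimage_lpBall_div_volume_lpBall_mono μ hU_inj hp hpq)
  rw [measure_preimage_lpBall_div_volume_lpBall μ hU_inj hq, lintegral_prod_lpDensity μ hU_inj hq]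
  exact ENNReal.mul_ne_top ENNReal.ofReal_ne_top (measure_preimage_lpBall_lt_top μ hU_inj hq).ne
end

section
/- Let C and B be symmetric convex bodies in ℝ^k (compact, convex, symmetric about the origin, with nonempty interior), with Minkowski gauges ‖·‖_C and ‖·‖_B respectively. Then for every p > 0, (|C| / |B|)^{1/k} ≥ ( ((k+p) / (k·|B|)) · ∫_B ‖x‖_C^p dx )^{-1/p}, where |·| denotes k-dimensional Lebesgue volume. -/
open MeasureTheory

/-!
The set `{‖·‖_C < s}` is contained in `s • C`, so it has volume at most `s ^ k * |C|`. Hence at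
least `|B| - t ^ (k / p) * |C|` of the volume of `B` lies where `‖·‖_C ^ p ≥ t`, and integrating
this bound over `0 < t ≤ T` bounds `∫_B ‖x‖_C ^ p` from below. The best `T` is the one with
`T ^ (k / p) * |C| = |B|`, and the resulting estimate is the claim.
-/

open Module Set
open scoped Topology

section SublevelSets

variable {α : Type*} [MeasurableSpace α] {ν : Measure α} [IsFiniteMeasure ν] {f : α → ℝ}
  {c d p q T : ℝ}

theorem integral_const_sub_mul_rpow (m : ℝ) (hq : -1 < q) :
    ∫ t in (0 : ℝ)..T, (m - c * t ^ q) = m * T - c * (T ^ (q + 1) / (q + 1)) := by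
  have hpow : IntervalIntegrable (fun t : ℝ ↦ t ^ q) volume 0 T :=
    intervalIntegral.intervalIntegrable_rpow' hq
  rw [intervalIntegral.integral_sub (by simp) (hpow.const_mul c), intervalIntegral.integral_const,
    intervalIntegral.integral_const_mul, integral_rpow (Or.inl hq),
    Real.zero_rpow (neg_lt_iff_pos_add.1 hq).ne']
  simp only [smul_eq_mul]
  ring

theorem integral_measureReal_le_le_integral (hf : Integrable f ν) (hf_nonneg : 0 ≤ᵐ[ν] f)
    (hT : 0 ≤ T) : ∫ t in (0 : ℝ)..T, ν.real {x | t ≤ f x} ≤ ∫ x, f x ∂ν := by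
  have hmin : Integrable (fun x ↦ min (f x) T) ν := hf.inf (integrable_const T)
  calc ∫ t in (0 : ℝ)..T, ν.real {x | t ≤ f x}
      = ∫ t in Ioc 0 T, ν.real {x | t ≤ min (f x) T} := by
        rw [intervalIntegral.integral_of_le hT]
        refine setIntegral_congr_fun measurableSet_Ioc fun t ht ↦ ?_
        simp only [le_min_iff, ht.2, and_true]
    _ = ∫ x, min (f x) T ∂ν := by
        refine (hmin.integral_eq_integral_Ioc_meas_le ?_ ?_).symm
        · filter_upwards [hf_nonneg] with x hx using le_min hx hT
        · exact .of_forall fun x ↦ min_le_right _ _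
    _ ≤ ∫ x, f x ∂ν := integral_mono hmin hf fun x ↦ min_le_left _ _

theorem mul_sub_le_integral_of_measureReal_lt_le (hf : Integrable f ν) (hf_nonneg : 0 ≤ᵐ[ν] f)
    (hq : -1 < q) (hT : 0 ≤ T) (hsub : ∀ t ∈ Ioo 0 T, ν.real {x | f x < t} ≤ c * t ^ q) :
    ν.real univ * T - c * (T ^ (q + 1) / (q + 1)) ≤ ∫ x, f x ∂ν := by
  have hanti : Antitone fun t ↦ ν.real {x | t ≤ f x} :=
    fun s t hst ↦ measureReal_mono fun x hx ↦ hst.trans hx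
  have hbound : IntervalIntegrable (fun t : ℝ ↦ ν.real univ - c * t ^ q) volume 0 T :=
    intervalIntegrable_const.sub ((intervalIntegral.intervalIntegrable_rpow' hq).const_mul c)
  have htail : ∀ t ∈ Ioo 0 T, ν.real univ - c * t ^ q ≤ ν.real {x | t ≤ f x} := by
    intro t ht
    have hcover : {x | f x < t} ∪ {x | t ≤ f x} = univ := by
      ext x
      simp [lt_or_ge]
    have hunion := measureReal_union_le (μ := ν) {x | f x < t} {x | t ≤ f x}
    rw [hcover] at hunion
    linarith [hsub t ht]
  calc ν.real univ * T - c * (T ^ (q + 1) / (q + 1))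
      = ∫ t in (0 : ℝ)..T, (ν.real univ - c * t ^ q) := (integral_const_sub_mul_rpow _ hq).symm
    _ ≤ ∫ t in (0 : ℝ)..T, ν.real {x | t ≤ f x} :=
        intervalIntegral.integral_mono_on_of_le_Ioo hT hbound hanti.intervalIntegrable
          htail
    _ ≤ ∫ x, f x ∂ν := integral_measureReal_le_le_integral hf hf_nonneg hT

theorem mul_rpow_inv_mul_le_integral_of_measureReal_lt_le (hf : Integrable f ν)
    (hf_nonneg : 0 ≤ᵐ[ν] f) (hc : 0 < c) (hq : 0 < q)
    (hsub : ∀ t > 0, ν.real {x | f x < t} ≤ c * t ^ q) :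
    ν.real univ * (ν.real univ / c) ^ q⁻¹ * (q / (q + 1)) ≤ ∫ x, f x ∂ν := by
  have hratio : 0 ≤ ν.real univ / c := by positivity
  have hT : 0 ≤ (ν.real univ / c) ^ q⁻¹ := by positivity
  have hTq : ((ν.real univ / c) ^ q⁻¹) ^ q = ν.real univ / c :=
    Real.rpow_inv_rpow hratio hq.ne'
  refine le_of_eq_of_le ?_ (mul_sub_le_integral_of_measureReal_lt_le hf hf_nonneg (by linarith) hT
    fun t ht ↦ hsub t ht.1)
  rw [Real.rpow_add_one' hT (by positivity), hTq]
  field_simp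
  ring

theorem mul_rpow_div_mul_le_integral_rpow_of_measureReal_lt_le (hf_nonneg : ∀ x, 0 ≤ f x)
    (hc : 0 < c) (hd : 0 < d) (hp : 0 < p) (hf : Integrable (fun x ↦ f x ^ p) ν)
    (hsub : ∀ s > 0, ν.real {x | f x < s} ≤ c * s ^ d) :
    ν.real univ * (ν.real univ / c) ^ (p / d) * (d / (d + p)) ≤ ∫ x, f x ^ p ∂ν := by
  have hsub_rpow : ∀ t > 0, ν.real {x | f x ^ p < t} ≤ c * t ^ (d / p) := by
    intro t ht
    have hset : {x | f x ^ p < t} = {x | f x < t ^ p⁻¹} := by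
      ext x
      exact (Real.lt_rpow_inv_iff_of_pos (hf_nonneg x) ht.le hp).symm
    have hpow : (t ^ p⁻¹) ^ d = t ^ (d / p) := by
      rw [← Real.rpow_mul ht.le, div_eq_inv_mul]
    rw [hset, ← hpow]
    exact hsub _ (Real.rpow_pos_of_pos ht _)
  have hmain := mul_rpow_inv_mul_le_integral_of_measureReal_lt_le hf
    (.of_forall fun x ↦ Real.rpow_nonneg (hf_nonneg x) p) hc (div_pos hd hp) hsub_rpow
  have hcoeff : d / p / (d / p + 1) = d / (d + p) := by field_simp
  rwa [inv_div, hcoeff] at hmain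

end SublevelSets

theorem mem_nhds_zero_of_convex_of_eq_neg {E : Type*} [AddCommGroup E] [Module ℝ E]
    [TopologicalSpace E] [IsTopologicalAddGroup E] [ContinuousConstSMul ℝ E] {C : Set E}
    (hconv : Convex ℝ C) (hsymm : C = -C) (hint : (interior C).Nonempty) : C ∈ 𝓝 0 := by
  obtain ⟨x, hx⟩ := hint
  have hneg : -x ∈ C := by
    rw [hsymm]
    simpa using interior_subset hx
  have hmid : (1 / 2 : ℝ) • x + (1 / 2 : ℝ) • -x ∈ interior C :=
    hconv.combo_interior_self_mem_interior hx hneg (by norm_num) (by norm_num) (by norm_num)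
  rw [smul_neg, add_neg_cancel] at hmid
  exact mem_interior_iff_mem_nhds.1 hmid

section Gauge

open scoped Pointwise

variable {E : Type*} [NormedAddCommGroup E] [NormedSpace ℝ E] [FiniteDimensional ℝ E]
  [MeasurableSpace E] [BorelSpace E] {μ : Measure E} [μ.IsAddHaarMeasure] {B C : Set E} {p s : ℝ}

theorem measure_ne_zero_of_absorbent (hC : Absorbent ℝ C) : μ C ≠ 0 := by
  intro hzero
  have hcover : ⋃ n : ℕ, (n : ℝ) • C = univ := by
    refine eq_univ_of_forall fun x ↦ mem_iUnion.2 ?_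
    obtain ⟨n, hn⟩ := (tendsto_natCast_atTop_cobounded.eventually (hC x)).exists
    exact ⟨n, singleton_subset_iff.1 hn⟩
  refine (NeZero.ne (μ univ)) ?_
  rw [← hcover]
  refine measure_iUnion_null fun n ↦ ?_
  rw [Measure.addHaar_smul, hzero, mul_zero]

theorem measure_gauge_lt_le (hC : StarConvex ℝ 0 C) (habs : Absorbent ℝ C) (hs : 0 ≤ s) :
    μ {x | gauge C x < s} ≤ ENNReal.ofReal (s ^ finrank ℝ E) * μ C := by
  rw [← Measure.addHaar_smul_of_nonneg μ hs]
  refine measure_mono fun x hx ↦ ?_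
  by_contra hnot
  exact (le_gauge_of_notMem hC habs.absorbs hnot).not_gt hx

theorem mul_rpow_div_mul_le_setIntegral_gauge_rpow [Nontrivial E] (hC : StarConvex ℝ 0 C)
    (habs : Absorbent ℝ C) (hCfin : μ C ≠ ⊤) (hBfin : μ B ≠ ⊤) (hp : 0 < p)
    (hint : IntegrableOn (fun x ↦ gauge C x ^ p) B μ) :
    μ.real B * (μ.real B / μ.real C) ^ (p / finrank ℝ E) * (finrank ℝ E / (finrank ℝ E + p))
      ≤ ∫ x in B, gauge C x ^ p ∂μ := by
  have : IsFiniteMeasure (μ.restrict B) := isFiniteMeasure_restrict.2 hBfin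
  have hCpos : 0 < μ.real C := ENNReal.toReal_pos (measure_ne_zero_of_absorbent habs) hCfin
  have hsub : ∀ s > 0, (μ.restrict B).real {x | gauge C x < s}
      ≤ μ.real C * s ^ (finrank ℝ E : ℝ) := by
    intro s hs
    refine ENNReal.toReal_le_of_le_ofReal (by positivity) ?_
    rw [mul_comm, ENNReal.ofReal_mul (by positivity), Real.rpow_natCast,
      ofReal_measureReal hCfin]
    exact (Measure.restrict_apply_le _ _).trans (measure_gauge_lt_le hC habs hs.le)
  simpa only [measureReal_restrict_apply_univ] using
    mul_rpow_div_mul_le_integral_rpow_of_measureReal_lt_le gauge_nonneg hCpos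
      (Nat.cast_pos.2 finrank_pos) hp hint hsub

theorem volume_ratio_ge_gauge_moment_general [Nontrivial E] (hC : StarConvex ℝ 0 C)
    (habs : Absorbent ℝ C) (hCfin : μ C ≠ ⊤) (hBzero : μ B ≠ 0) (hBfin : μ B ≠ ⊤) (hp : 0 < p)
    (hint : IntegrableOn (fun x ↦ gauge C x ^ p) B μ) :
    (μ.real C / μ.real B) ^ (1 / finrank ℝ E : ℝ)
      ≥ ((finrank ℝ E + p) / (finrank ℝ E * μ.real B) * ∫ x in B, gauge C x ^ p ∂μ)
          ^ (-(1 / p)) := by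
  have hmain := mul_rpow_div_mul_le_setIntegral_gauge_rpow hC habs hCfin hBfin hp hint
  have hd : (0 : ℝ) < finrank ℝ E := Nat.cast_pos.2 finrank_pos
  have hBpos : 0 < μ.real B := ENNReal.toReal_pos hBzero hBfin
  have hCpos : 0 < μ.real C := ENNReal.toReal_pos (measure_ne_zero_of_absorbent habs) hCfin
  have hmoment : (μ.real B / μ.real C) ^ (p / finrank ℝ E)
      ≤ (finrank ℝ E + p) / (finrank ℝ E * μ.real B) * ∫ x in B, gauge C x ^ p ∂μ := by
    refine le_of_eq_of_le ?_ (mul_le_mul_of_nonneg_left hmain (by positivity))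
    field_simp
  calc _ ≤ ((μ.real B / μ.real C) ^ (p / finrank ℝ E)) ^ (-(1 / p)) :=
        Real.rpow_le_rpow_of_nonpos (by positivity) hmoment (by simp [hp.le])
    _ = (μ.real B / μ.real C) ^ (-(1 / finrank ℝ E) : ℝ) := by
        rw [← Real.rpow_mul (by positivity)]
        field_simp
    _ = (μ.real C / μ.real B) ^ (1 / finrank ℝ E : ℝ) := by
        rw [Real.rpow_neg (by positivity), ← Real.inv_rpow (by positivity), inv_div]

end Gauge

theorem volume_ratio_ge_gauge_moment (k : ℕ) (hk : 0 < k)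
    (C B : Set (EuclideanSpace ℝ (Fin k)))
    (hCc : IsCompact C) (hCconv : Convex ℝ C) (hCsym : C = -C)
    (hCint : (interior C).Nonempty)
    (hBc : IsCompact B) (hBconv : Convex ℝ B) (hBsym : B = -B)
    (hBint : (interior B).Nonempty)
    (p : ℝ) (hp : 0 < p) :
    ((volume C).toReal / (volume B).toReal) ^ ((1 : ℝ) / k)
      ≥ ((((k : ℝ) + p) / (k * (volume B).toReal)) *
          ∫ x in B, gauge C x ^ p) ^ (-(1 / p)) := by
  have : NeZero k := ⟨hk.ne'⟩
  have hC0 : C ∈ 𝓝 0 := mem_nhds_zero_of_convex_of_eq_neg hCconv hCsym hCint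
  have hcont : Continuous fun x ↦ gauge C x ^ p :=
    (continuous_gauge hCconv hC0).rpow_const fun _ ↦ Or.inr hp.le
  simpa only [finrank_euclideanSpace_fin, measureReal_def] using
    volume_ratio_ge_gauge_moment_general (hCconv.starConvex (mem_of_mem_nhds hC0))
      (absorbent_nhds_zero hC0) hCc.measure_ne_top
      (Measure.measure_pos_of_nonempty_interior volume hBint).ne' hBc.measure_ne_top hp
      (hcont.continuousOn.integrableOn_compact hBc)
end
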